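/- For m ∈ ℤ[ω] with m ≡ 1 (mod 3), Σ over ℓ ≡ 1 (mod 3) with gcd(ℓ,m)=1 of μ(ℓ)/N(ℓ)² equals (9/(8·ζ_{ℚ(ω)}(2)))·∏_{π ≡ 1 (mod 3), π | m} (1 − N(π)^{−2})^{−1}. -/

import Mathlib

open Complex

noncomputable section

/-- The primitive cube root of unity `ω = e^{2πi/3}`. -/
def ω : ℂ := Complex.exp (2 * Real.pi * Complex.I / 3)

/-- The ring of Eisenstein integers `ℤ[ω]`, as a subring of `ℂ`. -/
def Zω : Subring ℂ := Subring.closure {ω}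

/-- `ω` as an element of `ℤ[ω]`. -/
def ωZ : Zω := ⟨ω, Subring.subset_closure rfl⟩

/-- The ramified prime `λ = 1 - ω` of `ℤ[ω]`. -/
def lamZ : Zω := 1 - ωZ

/-- The norm `N(a) = |a|²` from `ℚ(ω)` to `ℚ`, restricted to `ℤ[ω]`. -/
def Nm (a : Zω) : ℝ := Complex.normSq (a : ℂ)

/-- The norm of an Eisenstein integer, as a natural number. -/
def NmNat (a : Zω) : ℕ := ⌊Complex.normSq (a : ℂ)⌋₊

/-- `e(z) = e^{2πi Tr(z)} = e^{2πi (z + z̄)}`. -/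
def eE (z : ℂ) : ℂ := Complex.exp (2 * Real.pi * Complex.I * (z + (starRingEnd ℂ) z))

/-- `χ` is the cubic residue symbol `χ a b = (a/b)₃` on `ℤ[ω]`:
it is multiplicative in both arguments, and at prime moduli `π` coprime to `3`
it is given by the power-residue congruence
`(a/π)₃ ≡ a^{(N(π)-1)/3} (mod π)`, with values among `{1, ω, ω²}` (and `0` when `π ∣ a`). -/
def IsCubicSymbol (χ : Zω → Zω → Zω) : Prop :=
  (∀ a b₁ b₂ : Zω, χ a (b₁ * b₂) = χ a b₁ * χ a b₂) ∧
  (∀ a₁ a₂ b : Zω, χ (a₁ * a₂) b = χ a₁ b * χ a₂ b) ∧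
  (∀ a : Zω, χ a 1 = 1) ∧
  (∀ a π : Zω, Prime π → IsCoprime π 3 →
    (π ∣ a → χ a π = 0) ∧
    (¬ π ∣ a →
      ((χ a π : ℂ) = 1 ∨ (χ a π : ℂ) = ω ∨ (χ a π : ℂ) = ω ^ 2) ∧
      π ∣ (a ^ ((NmNat π - 1) / 3) - χ a π)))

/-- The shifted cubic Gauss sum `g(ν,c) = Σ_{d mod c} (d/c)₃ e(νd/c)`,
relative to a cubic residue symbol `χ`. -/
def gauss (χ : Zω → Zω → Zω) (ν c : Zω) : ℂ :=
  ∑' q : Zω ⧸ Ideal.span {c},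
    ((χ (Quotient.out q) c : Zω) : ℂ) * eE (((ν * Quotient.out q : Zω) : ℂ) / (c : ℂ))

/-- `μ` is the Möbius function of `ℤ[ω]`. -/
def IsMoebiusZω (μ : Zω → ℤ) : Prop :=
  μ 1 = 1 ∧
  (∀ a : Zω, ¬ Squarefree a → μ a = 0) ∧
  (∀ a b : Zω, IsCoprime a b → μ (a * b) = μ a * μ b) ∧
  (∀ π : Zω, Prime π → μ π = -1)

end

/-!
Elements of `ℤ[ω]` that are `≡ 1 (mod 3)`, the primary ones, correspond to ideals prime to
`λ = 1 - ω`, so the left side is the Möbius sum, weighted by the completely multiplicative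
`f(I) = N(I)⁻²`, over the ideals divisible neither by `(λ)` nor by any prime dividing `m`.

For a set `s` of primes let `A s` and `M s` be the sums of `f` and of `moebius * f` over the ideals
divisible by no prime in `s`. Adjoining a prime `p` to `s` multiplies `A s` by `1 - f p` and divides
`M s` by it, so `A s * M s` does not depend on `s`. Letting `s` exhaust all primes shows that it
equals `1`, hence `M s = (∏ p ∈ s, (1 - f p)⁻¹) / ζ(2)`. The constant `9 / 8 = (1 - 3⁻²)⁻¹` is the
factor at `λ`.
-/

section Sieve

open Filter Topology UniqueFactorizationMonoid

/-- The elements divisible by no `p i` with `i ∈ s`: what is left after sieving by these `p i`. -/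
def sifted {M ι : Type*} [Dvd M] (p : ι → M) (s : Set ι) : Set M :=
  {a | ∀ i ∈ s, ¬ p i ∣ a}

lemma sifted_empty {M ι : Type*} [Dvd M] (p : ι → M) : sifted p ∅ = Set.univ := by
  simp [sifted]

lemma tendsto_tsum_sifted {M ι E : Type*} [Dvd M] [NormedAddCommGroup E] [CompleteSpace E]
    (p : ι → M) {F : M → E} (hF : Summable (‖F ·‖)) :
    Tendsto (fun t : Finset ι ↦ ∑' a : sifted p t, F a) atTop
      (𝓝 (∑' a : sifted p Set.univ, F a)) := by
  simp_rw [tsum_subtype]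
  refine tendsto_tsum_of_dominated_convergence hF (fun a ↦ tendsto_const_nhds.congr' ?_)
    (.of_forall fun t a ↦ norm_indicator_le_norm_self F a)
  by_cases ha : a ∈ sifted p Set.univ
  · filter_upwards with t
    have hat : a ∈ sifted p t := fun i _ ↦ ha i (Set.mem_univ i)
    rw [Set.indicator_of_mem ha, Set.indicator_of_mem hat]
  · obtain ⟨i, hia⟩ : ∃ i, p i ∣ a := by simpa [sifted] using ha
    filter_upwards [eventually_ge_atTop {i}] with t hit
    have hat : a ∉ sifted p t := fun h ↦ h i (Finset.singleton_subset_iff.1 hit) hia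
    rw [Set.indicator_of_notMem ha, Set.indicator_of_notMem hat]

section Cancel

variable {M ι E 𝕜 : Type*} [CommMonoidWithZero M] [IsCancelMulZero M] [Subsingleton Mˣ]
  [NormedAddCommGroup E] [CompleteSpace E] [NormedField 𝕜] [CompleteSpace 𝕜]
  {p : ι → M} {s : Set ι} {i : ι} {f : M →*₀ 𝕜}

lemma mul_mem_sifted_iff (hp : ∀ i, Prime (p i)) (hinj : Function.Injective p) (hi : i ∉ s)
    {a : M} : p i * a ∈ sifted p s ↔ a ∈ sifted p s := by
  refine ⟨fun h j hj hja ↦ h j hj (hja.mul_left _), fun h j hj hja ↦ ?_⟩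
  rcases (hp j).dvd_or_dvd hja with hji | hja
  · have hpji : p j = p i := associated_iff_eq.1 (((hp j).dvd_prime_iff_associated (hp i)).1 hji)
    exact hi (hinj hpji ▸ hj)
  · exact h j hj hja

lemma sifted_eq_union (hp : ∀ i, Prime (p i)) (hinj : Function.Injective p) (hi : i ∉ s) :
    sifted p s = sifted p (insert i s) ∪ (p i * ·) '' sifted p s := by
  ext a
  constructor
  · intro ha
    by_cases hia : p i ∣ a
    · obtain ⟨b, rfl⟩ := hia
      exact .inr ⟨b, (mul_mem_sifted_iff hp hinj hi).1 ha, rfl⟩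
    · exact .inl (Set.forall_mem_insert.2 ⟨hia, ha⟩)
  · rintro (ha | ⟨b, hb, rfl⟩)
    · exact fun j hj ↦ ha j (.inr hj)
    · exact (mul_mem_sifted_iff hp hinj hi).2 hb

lemma tsum_sifted_eq_add (hp : ∀ i, Prime (p i)) (hinj : Function.Injective p) (hi : i ∉ s)
    {F : M → E} (hF : Summable F) :
    ∑' a : sifted p s, F a =
      ∑' a : sifted p (insert i s), F a + ∑' a : sifted p s, F (p i * a) := by
  have hdisj : Disjoint (sifted p (insert i s)) ((p i * ·) '' sifted p s) := by
    rw [Set.disjoint_left]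
    rintro _ ha ⟨b, -, rfl⟩
    exact ha i (.inl rfl) (dvd_mul_right _ _)
  conv_lhs => rw [sifted_eq_union hp hinj hi]
  rw [Summable.tsum_union_disjoint hdisj (hF.subtype _) (hF.subtype _),
    tsum_image F (mul_right_injective₀ (hp i).ne_zero).injOn]

lemma tsum_sifted_insert (hp : ∀ i, Prime (p i)) (hinj : Function.Injective p) (hi : i ∉ s)
    (hf : Summable f) :
    ∑' a : sifted p (insert i s), f a = (1 - f (p i)) * ∑' a : sifted p s, f a := by
  have h := tsum_sifted_eq_add hp hinj hi hf
  simp only [map_mul, tsum_mul_left] at h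
  linear_combination -h

lemma tsum_sifted_eq_prod (hp : ∀ i, Prime (p i)) (hinj : Function.Injective p)
    (hf : Summable f) (t : Finset ι) :
    ∑' a : sifted p t, f a = (∏ i ∈ t, (1 - f (p i))) * ∑' a, f a := by
  classical
  induction t using Finset.induction_on with
  | empty => rw [Finset.coe_empty, sifted_empty, tsum_univ, Finset.prod_empty, one_mul]
  | insert i t hi ih =>
    rw [Finset.coe_insert, tsum_sifted_insert hp hinj (mod_cast hi) hf, ih,
      Finset.prod_insert hi, mul_assoc]

end Cancel

section Moebius

variable {M : Type*} [CommMonoidWithZero M] [UniqueFactorizationMonoid M]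

lemma moebius_prime_mul {p a : M} (hp : Prime p) (ha : ¬ p ∣ a) :
    moebius (p * a) = -moebius a := by
  rw [(hp.irreducible.isRelPrime_iff_not_dvd.2 ha).moebius_mul, hp.irreducible.moebius_eq,
    neg_one_mul]

lemma moebius_prime_mul_of_dvd {p a : M} (hp : Prime p) (ha : p ∣ a) : moebius (p * a) = 0 :=
  moebius_of_not_squarefree fun h ↦ hp.not_isUnit (h p (mul_dvd_mul_left p ha))

lemma norm_moebius_mul_le {𝕜 : Type*} [NormedField 𝕜] (a : M) (x : 𝕜) :
    ‖(moebius a : 𝕜) * x‖ ≤ ‖x‖ := by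
  rw [moebius]
  split_ifs <;> simp

lemma tsum_sifted_primes [Subsingleton Mˣ] {E : Type*} [AddCommMonoid E]
    [TopologicalSpace E] (F : M → E) (hF : F 0 = 0) :
    ∑' a : sifted (Subtype.val : {p : M // Prime p} → M) Set.univ, F a = F 1 := by
  have h_one : (1 : M) ∈ sifted (Subtype.val : {p : M // Prime p} → M) Set.univ :=
    fun p _ h ↦ p.2.not_isUnit (isUnit_of_dvd_one h)
  refine tsum_eq_single (⟨1, h_one⟩ : sifted Subtype.val Set.univ) fun a ha ↦ ?_
  by_contra hFa
  have ha0 : (a : M) ≠ 0 := fun h ↦ hFa (h ▸ hF)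
  have hau : ¬ IsUnit (a : M) := fun h ↦ ha (Subtype.ext (isUnit_iff_eq_one.1 h))
  obtain ⟨q, hq, hqa⟩ := WfDvdMonoid.exists_irreducible_factor hau ha0
  exact a.2 ⟨q, irreducible_iff_prime.1 hq⟩ trivial hqa

variable {ι 𝕜 : Type*} [NormedField 𝕜] {f : M →*₀ 𝕜}

lemma summable_norm_moebius_mul (hf : Summable (‖f ·‖)) :
    Summable fun a ↦ ‖(moebius a : 𝕜) * f a‖ :=
  hf.of_nonneg_of_le (fun _ ↦ norm_nonneg _) fun a ↦ norm_moebius_mul_le a (f a)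

variable [CompleteSpace 𝕜] [Subsingleton Mˣ]

lemma tsum_moebius_sifted {p : ι → M} {s : Set ι} {i : ι} (hp : ∀ i, Prime (p i))
    (hinj : Function.Injective p) (hi : i ∉ s) (hf : Summable (‖f ·‖)) :
    ∑' a : sifted p s, (moebius (a : M) : 𝕜) * f a =
      (1 - f (p i)) * ∑' a : sifted p (insert i s), (moebius (a : M) : 𝕜) * f a := by
  have hF := (summable_norm_moebius_mul hf).of_norm
  have hFp : Summable fun a ↦ (moebius (p i * a) : 𝕜) * f (p i * a) :=
    hF.comp_injective (mul_right_injective₀ (hp i).ne_zero)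
  have hpp (a : M) : (moebius (p i * (p i * a)) : 𝕜) * f (p i * (p i * a)) = 0 := by
    rw [moebius_prime_mul_of_dvd (hp i) (dvd_mul_right _ _), Int.cast_zero, zero_mul]
  have hneg (a : sifted p (insert i s)) : (moebius (p i * (a : M)) : 𝕜) * f (p i * a) =
      -f (p i) * ((moebius (a : M) : 𝕜) * f a) := by
    rw [moebius_prime_mul (hp i) (a.2 i (.inl rfl)), map_mul]
    push_cast
    ring
  rw [tsum_sifted_eq_add hp hinj hi hF, tsum_sifted_eq_add hp hinj hi hFp]
  simp_rw [hpp, tsum_zero, add_zero, hneg, tsum_mul_left]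
  ring

lemma tsum_sifted_mul_tsum_moebius_sifted {p : ι → M} (hp : ∀ i, Prime (p i))
    (hinj : Function.Injective p) (hf : Summable (‖f ·‖)) (t : Finset ι) :
    (∑' a : sifted p t, f a) * ∑' a : sifted p t, (moebius (a : M) : 𝕜) * f a =
      (∑' a, f a) * ∑' a, (moebius a : 𝕜) * f a := by
  classical
  induction t using Finset.induction_on with
  | empty =>
    rw [Finset.coe_empty, sifted_empty, tsum_univ, tsum_univ fun a ↦ (moebius a : 𝕜) * f a]
  | insert i t hi ih =>
    have hi' : i ∉ (t : Set ι) := mod_cast hi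
    rw [← ih, Finset.coe_insert, tsum_sifted_insert hp hinj hi' hf.of_norm,
      tsum_moebius_sifted hp hinj hi' hf]
    ring

theorem tsum_mul_tsum_moebius (hf : Summable (‖f ·‖)) :
    (∑' a, f a) * ∑' a, (moebius a : 𝕜) * f a = 1 := by
  have hlim := (tendsto_tsum_sifted (Subtype.val : {p : M // Prime p} → M) hf).mul
    (tendsto_tsum_sifted Subtype.val (summable_norm_moebius_mul hf))
  rw [tsum_sifted_primes f (map_zero f),
    tsum_sifted_primes (fun a ↦ (moebius a : 𝕜) * f a) (by simp)] at hlim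
  simp only [tsum_sifted_mul_tsum_moebius_sifted (fun p : {p : M // Prime p} ↦ p.2)
    Subtype.val_injective hf] at hlim
  simpa using tendsto_nhds_unique tendsto_const_nhds hlim

theorem hasProd_one_sub_inv {p : ι → M} (hp : ∀ i, Prime (p i)) (hinj : Function.Injective p)
    (hf : Summable (‖f ·‖)) :
    HasProd (fun i ↦ (1 - f (p i))⁻¹)
      ((∑' a, f a) * ∑' a : sifted p Set.univ, (moebius (a : M) : 𝕜) * f a) := by
  have hprod (t : Finset ι) : ∏ i ∈ t, (1 - f (p i))⁻¹ =
      (∑' a, f a) * ∑' a : sifted p t, (moebius (a : M) : 𝕜) * f a := by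
    have h := (tsum_sifted_mul_tsum_moebius_sifted hp hinj hf t).trans (tsum_mul_tsum_moebius hf)
    rw [tsum_sifted_eq_prod hp hinj hf.of_norm, mul_assoc] at h
    rw [Finset.prod_inv_distrib]
    exact (eq_inv_of_mul_eq_one_right h).symm
  have hlim := (tendsto_tsum_sifted p (summable_norm_moebius_mul (f := f) hf)).const_mul
    (∑' a, f a)
  rw [HasProd, SummationFilter.unconditional_filter]
  exact hlim.congr fun t ↦ (hprod t).symm

end Moebius

end Sieve

noncomputable section InvSqAbsNorm

lemma cpow_neg_two (z : ℂ) : z ^ (-2 : ℂ) = (z ^ 2)⁻¹ := by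
  rw [cpow_neg]
  norm_cast

variable (S : Type*) [CommRing S] [IsDedekindDomain S] [Module.Free ℤ S]

/-- The completely multiplicative function `I ↦ N(I)⁻²` on ideals, whose Dirichlet series is
the Dedekind zeta value at `2`; it takes the value `0` at the zero ideal. -/
def invSqAbsNorm : Ideal S →*₀ ℂ :=
  invMonoidWithZeroHom.comp ((powMonoidWithZeroHom two_ne_zero).comp
    ((Nat.castRingHom ℂ).toMonoidWithZeroHom.comp Ideal.absNorm))

variable {S}

lemma invSqAbsNorm_apply (I : Ideal S) : invSqAbsNorm S I = ((Ideal.absNorm I : ℂ) ^ 2)⁻¹ := rfl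

lemma tsum_invSqAbsNorm :
    ∑' I : {I : Ideal S // I ≠ ⊥}, (Nat.card (S ⧸ I.1) : ℂ) ^ (-2 : ℂ) =
      ∑' I, invSqAbsNorm S I := by
  rw [← tsum_subtype_eq_of_support_subset (f := invSqAbsNorm S) (s := {I | I ≠ ⊥})
    fun I hI h ↦ hI (h ▸ map_zero _)]
  refine tsum_congr fun I ↦ ?_
  rw [cpow_neg_two, invSqAbsNorm_apply, Ideal.absNorm_apply, Submodule.cardQuot_apply]

end InvSqAbsNorm

noncomputable section EisensteinIntegers

open scoped NumberField

lemma isPrimitiveRoot_omega : IsPrimitiveRoot ω 3 := by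
  simpa [ω] using Complex.isPrimitiveRoot_exp 3 three_ne_zero

lemma omega_sq_add_omega_add_one : ω ^ 2 + ω + 1 = 0 := by
  have h := isPrimitiveRoot_omega.geom_sum_eq_zero (by norm_num)
  simp only [Finset.sum_range_succ, Finset.sum_range_zero, pow_zero, pow_one] at h
  linear_combination h

lemma omegaZ_sq_add_omegaZ_add_one : ωZ ^ 2 + ωZ + 1 = 0 :=
  Subtype.ext (by simpa [ωZ] using omega_sq_add_omega_add_one)

lemma omega_re : ω.re = -(1 / 2) := by
  have h : (2 * Real.pi * Complex.I / 3 : ℂ) = (Real.pi - Real.pi / 3 : ℝ) * Complex.I := by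
    push_cast; ring
  rw [ω, h, Complex.exp_ofReal_mul_I_re, Real.cos_pi_sub, Real.cos_pi_div_three]

lemma omega_im : ω.im = √3 / 2 := by
  have h : (2 * Real.pi * Complex.I / 3 : ℂ) = (Real.pi - Real.pi / 3 : ℝ) * Complex.I := by
    push_cast; ring
  rw [ω, h, Complex.exp_ofReal_mul_I_im, Real.sin_pi_sub, Real.sin_pi_div_three]

lemma range_eq_Zω_of_map_eq {K : Type*} [Field K] [CharZero K] [IsCyclotomicExtension {3} ℚ K]
    {ζ : K} (hζ : IsPrimitiveRoot ζ 3) {φ : 𝓞 K →+* ℂ} (hφ : φ hζ.toInteger = ω) :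
    φ.range = Zω := by
  have htop : Subring.closure {hζ.toInteger} = ⊤ := by
    have h := hζ.integralPowerBasis.adjoin_gen_eq_top
    rw [hζ.integralPowerBasis_gen, Algebra.adjoin_int] at h
    exact SetLike.coe_injective (congrArg (fun A : Subalgebra ℤ (𝓞 K) ↦ (A : Set (𝓞 K))) h)
  rw [RingHom.range_eq_map, ← htop, RingHom.map_closure, Set.image_singleton, hφ, Zω]

instance : IsPrincipalIdealRing Zω := by
  have : IsCyclotomicExtension {3} ℚ (CyclotomicField 3 ℚ) :=
    CyclotomicField.isCyclotomicExtension 3 ℚ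
  have hζ := IsCyclotomicExtension.zeta_spec 3 ℚ (CyclotomicField 3 ℚ)
  let e := hζ.embeddingsEquivPrimitiveRoots ℂ (Polynomial.cyclotomic.irreducible_rat three_pos)
  let φ := e.symm ⟨ω, (mem_primitiveRoots three_pos).2 isPrimitiveRoot_omega⟩
  have hφ : φ (IsCyclotomicExtension.zeta 3 ℚ (CyclotomicField 3 ℚ)) = ω :=
    congrArg Subtype.val (e.apply_symm_apply _)
  let ψ : 𝓞 (CyclotomicField 3 ℚ) →+* ℂ := φ.toRingHom.comp (algebraMap _ _)
  have := IsCyclotomicExtension.Rat.three_pid (CyclotomicField 3 ℚ)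
  rw [← range_eq_Zω_of_map_eq hζ (φ := ψ) hφ]
  exact .of_surjective ψ.rangeRestrict ψ.rangeRestrict_surjective

/-- The map `x + y ε ↦ x + y ω` from the quadratic `ℤ`-algebra with `ε ^ 2 = -1 - ε`. -/
def quadraticAlgebraHom : QuadraticAlgebra ℤ (-1) (-1) →ₐ[ℤ] Zω :=
  QuadraticAlgebra.lift ⟨ωZ, by linear_combination omegaZ_sq_add_omegaZ_add_one⟩

lemma coe_quadraticAlgebraHom (z : QuadraticAlgebra ℤ (-1) (-1)) :
    (quadraticAlgebraHom z : ℂ) = z.re + z.im * ω := by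
  simp [quadraticAlgebraHom, QuadraticAlgebra.lift, ωZ]

lemma quadraticAlgebraHom_bijective : Function.Bijective quadraticAlgebraHom := by
  constructor
  · refine (injective_iff_map_eq_zero _).2 fun z hz ↦ ?_
    have hcoe : (z.re + z.im * ω : ℂ) = 0 := by rw [← coe_quadraticAlgebraHom, hz]; rfl
    have him : z.im = 0 := by simpa [omega_im] using congrArg Complex.im hcoe
    exact QuadraticAlgebra.ext (by simpa [him] using hcoe) him
  · have hle : Zω ≤ (Zω.subtype.comp quadraticAlgebraHom.toRingHom).range :=
      Subring.closure_le.2 (by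
        rintro _ rfl
        exact ⟨⟨0, 1⟩, by simp [coe_quadraticAlgebraHom]⟩)
    exact fun a ↦ (hle a.2).imp fun z hz ↦ Subtype.ext hz

/-- `ℤ[ω]` as a quadratic `ℤ`-algebra, which gives it a `ℤ`-basis and identifies `Nm` with the
algebra norm. -/
def quadraticAlgebraEquiv : QuadraticAlgebra ℤ (-1) (-1) ≃ₐ[ℤ] Zω :=
  .ofBijective quadraticAlgebraHom quadraticAlgebraHom_bijective

instance : Module.Free ℤ Zω := .of_equiv quadraticAlgebraEquiv.toLinearEquiv

instance : Module.Finite ℤ Zω := .equiv quadraticAlgebraEquiv.toLinearEquiv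

lemma finrank_Zω : Module.finrank ℤ Zω = 2 := by
  rw [← quadraticAlgebraEquiv.toLinearEquiv.finrank_eq, QuadraticAlgebra.finrank_eq_two]

lemma normSq_add_mul_omega (x y : ℝ) : normSq (x + y * ω) = x ^ 2 - x * y + y ^ 2 := by
  have h3 : √3 ^ 2 = 3 := Real.sq_sqrt (by norm_num)
  simp only [normSq_apply, add_re, add_im, mul_re, mul_im, ofReal_re, ofReal_im, omega_re,
    omega_im]
  linear_combination y ^ 2 / 4 * h3

lemma Nm_eq_norm (a : Zω) : Nm a = Algebra.norm ℤ a := by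
  obtain ⟨z, rfl⟩ := quadraticAlgebraEquiv.surjective a
  have hz : Algebra.norm ℤ z = QuadraticAlgebra.norm z :=
    QuadraticAlgebra.det_toLinearMap_eq_norm z
  have hcoe : (quadraticAlgebraEquiv z : ℂ) = (z.re : ℝ) + (z.im : ℝ) * ω := by
    rw [ofReal_intCast, ofReal_intCast]
    exact coe_quadraticAlgebraHom z
  rw [Algebra.norm_eq_of_algEquiv, hz, Nm, hcoe, normSq_add_mul_omega, QuadraticAlgebra.norm_def]
  push_cast
  ring

lemma absNorm_span_singleton_eq_Nm (a : Zω) : (Ideal.absNorm (Ideal.span {a}) : ℝ) = Nm a := by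
  have hnonneg : 0 ≤ Algebra.norm ℤ a := by
    have h : 0 ≤ Nm a := normSq_nonneg _
    rw [Nm_eq_norm] at h
    exact_mod_cast h
  rw [Ideal.absNorm_span_singleton, Nm_eq_norm, Nat.cast_natAbs, abs_of_nonneg hnonneg]

lemma Nm_eq_sq_norm (a : Zω) : Nm a = ‖(a : ℂ)‖ ^ 2 :=
  normSq_eq_norm_sq _

lemma one_le_norm {a : Zω} (ha : a ≠ 0) : 1 ≤ ‖(a : ℂ)‖ := by
  have hpos : 0 < Nm a := normSq_pos.2 (by simpa using ha)
  rw [Nm_eq_norm] at hpos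
  rw [← one_le_sq_iff₀ (norm_nonneg _), ← Nm_eq_sq_norm, Nm_eq_norm]
  exact_mod_cast hpos

instance : DiscreteTopology Zω :=
  .of_forall_le_dist one_pos fun a b hab ↦ by
    simpa [Subtype.dist_eq, dist_eq] using one_le_norm (sub_ne_zero.2 hab)

lemma summable_inv_Nm_sq : Summable fun a : Zω ↦ (Nm a ^ 2)⁻¹ := by
  let L : Submodule ℤ ℂ := Zω.toAddSubgroup.toIntSubmodule
  have : DiscreteTopology L := inferInstanceAs (DiscreteTopology Zω)
  have hrank : Module.finrank ℤ L = 2 := finrank_Zω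
  have h := ZLattice.summable_norm_pow_inv L 4 (by omega)
  refine (show Summable fun a : Zω ↦ ‖(a : ℂ)‖⁻¹ ^ 4 from h).congr fun a ↦ ?_
  rw [Nm_eq_sq_norm, ← pow_mul, inv_pow]

lemma norm_coe_of_isUnit {u : Zω} (hu : IsUnit u) : ‖(u : ℂ)‖ = 1 := by
  obtain ⟨v, hv⟩ := hu.exists_right_inv
  have hmul : ‖(u : ℂ)‖ * ‖(v : ℂ)‖ = 1 := by
    simpa using congrArg (fun x : Zω ↦ ‖(x : ℂ)‖) hv
  have hv0 : v ≠ 0 := right_ne_zero_of_mul_eq_one hv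
  have hu1 := one_le_norm hu.ne_zero
  have hv1 := one_le_norm hv0
  nlinarith

lemma invSqAbsNorm_span_singleton (a : Zω) :
    invSqAbsNorm Zω (Ideal.span {a}) = ((Nm a : ℂ) ^ 2)⁻¹ := by
  rw [invSqAbsNorm_apply, ← absNorm_span_singleton_eq_Nm, ofReal_natCast]

lemma summable_norm_invSqAbsNorm : Summable (‖invSqAbsNorm Zω ·‖) := by
  have hinj : Function.Injective fun I : Ideal Zω ↦ Submodule.IsPrincipal.generator I :=
    Function.LeftInverse.injective (g := fun a ↦ Ideal.span {a}) fun I ↦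
      I.span_singleton_generator
  refine (summable_inv_Nm_sq.comp_injective hinj).congr fun I ↦ ?_
  rw [← I.span_singleton_generator, invSqAbsNorm_span_singleton]
  simp

end EisensteinIntegers

noncomputable section Primary

open UniqueFactorizationMonoid

lemma isUnit_omegaZ : IsUnit ωZ :=
  .of_mul_eq_one (-1 - ωZ) (by linear_combination -omegaZ_sq_add_omegaZ_add_one)

lemma Nm_lamZ : Nm lamZ = 3 := by
  have hcoe : (lamZ : ℂ) = (1 : ℝ) + (-1 : ℝ) * ω := by
    simp [lamZ, ωZ, sub_eq_add_neg]
  rw [Nm, hcoe, normSq_add_mul_omega]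
  norm_num

lemma prime_lamZ : Prime lamZ := by
  have habs : Ideal.absNorm (Ideal.span {lamZ}) = 3 := by
    exact_mod_cast (absNorm_span_singleton_eq_Nm lamZ).trans Nm_lamZ
  have hne : lamZ ≠ 0 := fun h ↦ by simp [h] at habs
  exact Ideal.prime_of_irreducible_absNorm_span hne (habs ▸ Nat.prime_three)

lemma associated_lamZ_sq_three : Associated (lamZ ^ 2) 3 := by
  obtain ⟨u, hu⟩ := (isUnit_omegaZ.pow 2).neg
  refine ⟨u, ?_⟩
  rw [hu, lamZ]
  linear_combination -(ωZ ^ 2 - 3 * ωZ + 3) * omegaZ_sq_add_omegaZ_add_one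

lemma lamZ_dvd_three : lamZ ∣ 3 :=
  (dvd_pow_self lamZ two_ne_zero).trans associated_lamZ_sq_three.dvd

lemma not_lamZ_dvd_of_primary {a : Zω} (ha : 3 ∣ a - 1) : ¬ lamZ ∣ a := fun h ↦
  prime_lamZ.not_dvd_one ((dvd_sub_right h).1 (lamZ_dvd_three.trans ha))

lemma lamZ_dvd_sub_intCast (a : Zω) : ∃ n : ℤ, lamZ ∣ a - n := by
  obtain ⟨z, rfl⟩ := quadraticAlgebraEquiv.surjective a
  refine ⟨z.re + z.im, -z.im, Subtype.ext ?_⟩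
  have hz : (quadraticAlgebraEquiv z : ℂ) = z.re + z.im * ω := coe_quadraticAlgebraHom z
  push_cast [hz, lamZ, ωZ]
  ring

lemma lamZ_dvd_or_sub_one_or_add_one (a : Zω) : lamZ ∣ a ∨ lamZ ∣ a - 1 ∨ lamZ ∣ a + 1 := by
  obtain ⟨n, hn⟩ := lamZ_dvd_sub_intCast a
  have hcong {r : ℤ} (hr : 3 ∣ n - r) : lamZ ∣ a - r := by
    have h3 : (3 : Zω) ∣ n - r := by simpa using map_dvd (Int.castRingHom Zω) hr
    simpa using dvd_add hn (lamZ_dvd_three.trans h3)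
  obtain h | h | h : 3 ∣ n - 0 ∨ 3 ∣ n - 1 ∨ 3 ∣ n - (-1) := by omega
  · exact .inl (by simpa using hcong h)
  · exact .inr (.inl (by simpa using hcong h))
  · exact .inr (.inr (by simpa using hcong h))

lemma exists_associated_primary_of_dvd_sub_one {a : Zω} (ha : lamZ ∣ a - 1) :
    ∃ b, Associated a b ∧ 3 ∣ b - 1 := by
  obtain ⟨b, hb⟩ := ha
  simp_rw [← associated_lamZ_sq_three.dvd_iff_dvd_left]
  have hω := omegaZ_sq_add_omegaZ_add_one
  rcases lamZ_dvd_or_sub_one_or_add_one b with ⟨c, hc⟩ | ⟨c, hc⟩ | ⟨c, hc⟩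
  · exact ⟨a, .refl a, c, by linear_combination hb + lamZ * hc⟩
  · refine ⟨a * ωZ, associated_mul_unit_right a _ isUnit_omegaZ, c * ωZ - 1, ?_⟩
    unfold lamZ at hb hc ⊢
    linear_combination ωZ * hb + ωZ * (1 - ωZ) * hc
  · refine ⟨a * ωZ ^ 2, associated_mul_unit_right a _ (isUnit_omegaZ.pow 2), c * ωZ ^ 2, ?_⟩
    unfold lamZ at hb hc ⊢
    linear_combination ωZ ^ 2 * hb + ωZ ^ 2 * (1 - ωZ) * hc + (ωZ - 1) * hω

lemma exists_associated_primary {a : Zω} (ha : ¬ lamZ ∣ a) :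
    ∃ b, Associated a b ∧ 3 ∣ b - 1 := by
  rcases (lamZ_dvd_or_sub_one_or_add_one a).resolve_left ha with h | h
  · exact exists_associated_primary_of_dvd_sub_one h
  · have hneg : lamZ ∣ -a - 1 := by rwa [← dvd_neg, neg_sub, sub_neg_eq_add, add_comm]
    obtain ⟨b, hab, hb⟩ := exists_associated_primary_of_dvd_sub_one hneg
    exact ⟨b, (Associated.refl a).neg_right.trans hab, hb⟩

lemma eq_one_of_isUnit_of_primary {u : Zω} (hu : IsUnit u) (hu1 : 3 ∣ u - 1) : u = 1 := by
  obtain ⟨c, hc⟩ := hu1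
  by_contra hne
  have hc0 : c ≠ 0 := by
    rintro rfl
    exact hne (sub_eq_zero.1 (by simpa using hc))
  have hlower : 3 ≤ ‖(u : ℂ) - 1‖ := by
    have h : (u : ℂ) - 1 = 3 * c := congrArg Subtype.val hc
    rw [h, norm_mul, Complex.norm_ofNat]
    linarith [one_le_norm hc0]
  have hupper : ‖(u : ℂ) - 1‖ ≤ 1 + 1 := by
    simpa [norm_coe_of_isUnit hu] using norm_sub_le (u : ℂ) 1
  linarith

lemma eq_of_associated_of_primary {a b : Zω} (hab : Associated a b) (ha : 3 ∣ a - 1)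
    (hb : 3 ∣ b - 1) : a = b := by
  obtain ⟨u, rfl⟩ := hab
  have hu : (3 : Zω) ∣ u - 1 := by
    convert dvd_sub hb (ha.mul_right u) using 1
    ring
  rw [eq_one_of_isUnit_of_primary u.isUnit hu, mul_one]

lemma eq_of_span_singleton_eq_of_primary {a b : Zω} (hab : Ideal.span {a} = Ideal.span {b})
    (ha : 3 ∣ a - 1) (hb : 3 ∣ b - 1) : a = b :=
  eq_of_associated_of_primary (Ideal.span_singleton_eq_span_singleton.1 hab) ha hb

lemma IsMoebiusZω.map_unit {μ : Zω → ℤ} (hμ : IsMoebiusZω μ) {u : Zω} (hu : IsUnit u) :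
    μ u = 1 := by
  obtain ⟨-, -, hmul, hprime⟩ := hμ
  have hassoc : Associated lamZ (u * lamZ) := associated_unit_mul_right lamZ u hu
  have h := hmul u lamZ (isCoprime_one_left.of_isCoprime_of_dvd_left hu.dvd)
  rw [hprime _ (hassoc.prime prime_lamZ), hprime _ prime_lamZ] at h
  linarith

lemma IsMoebiusZω.moebius_span_singleton {μ : Zω → ℤ} (hμ : IsMoebiusZω μ) (a : Zω) :
    moebius (Ideal.span {a}) = μ a := by
  have ⟨_, hsq, hmul, hprime⟩ := hμ
  induction a using induction_on_prime with
  | h₁ =>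
    rw [hsq 0 not_squarefree_zero, Ideal.span_singleton_zero]
    exact moebius_of_not_squarefree not_squarefree_zero
  | h₂ u hu =>
    rw [hμ.map_unit hu, Ideal.span_singleton_eq_top.2 hu, ← Ideal.one_eq_top, moebius_one]
  | h₃ a p _ hp ih =>
    have hp' : Prime (Ideal.span {p}) := Ideal.prime_span_singleton_iff.2 hp
    rw [← Ideal.span_singleton_mul_span_singleton]
    by_cases hpa : p ∣ a
    · rw [moebius_prime_mul_of_dvd hp' (Ideal.span_singleton_dvd_span_singleton_iff_dvd.2 hpa),
        hsq _ fun h ↦ hp.not_isUnit (h p (mul_dvd_mul_left p hpa))]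
    · have hcop : IsCoprime p a := hp.irreducible.coprime_iff_not_dvd.2 hpa
      rw [moebius_prime_mul hp' (Ideal.span_singleton_dvd_span_singleton_iff_dvd.not.2 hpa), ih,
        hmul p a hcop, hprime p hp, neg_one_mul]

/-- The prime ideals that must not divide `(ℓ)` for `ℓ` to have a primary associate coprime to
`m`: those generated by the primary primes dividing `m` (indexed by these primes), and `(λ)`. -/
def excludedPrime (m : Zω) : {π : Zω // Prime π ∧ 3 ∣ π - 1 ∧ π ∣ m} ⊕ Unit → Ideal Zω :=
  Sum.elim (fun π ↦ Ideal.span {π.1}) fun _ ↦ Ideal.span {lamZ}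

lemma prime_excludedPrime (m : Zω) (i) : Prime (excludedPrime m i) := by
  rcases i with π | _
  · exact Ideal.prime_span_singleton_iff.2 π.2.1
  · exact Ideal.prime_span_singleton_iff.2 prime_lamZ

lemma excludedPrime_injective (m : Zω) : Function.Injective (excludedPrime m) := by
  refine .sumElim (fun π ρ h ↦ Subtype.ext ?_) (Function.injective_of_subsingleton _) ?_
  · exact eq_of_span_singleton_eq_of_primary h π.2.2.1 ρ.2.2.1
  · intro π _ h
    exact not_lamZ_dvd_of_primary π.2.2.1 (Ideal.span_singleton_eq_span_singleton.1 h).dvd'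

lemma span_singleton_mem_sifted_excludedPrime {m a : Zω} :
    Ideal.span {a} ∈ sifted (excludedPrime m) Set.univ ↔
      (∀ π : Zω, Prime π → 3 ∣ π - 1 → π ∣ m → ¬ π ∣ a) ∧ ¬ lamZ ∣ a := by
  simp [sifted, excludedPrime, Ideal.mem_span_singleton]

lemma isCoprime_of_primary {m a : Zω} (ha : 3 ∣ a - 1)
    (h : ∀ π : Zω, Prime π → 3 ∣ π - 1 → π ∣ m → ¬ π ∣ a) : IsCoprime a m := by
  have hlam := not_lamZ_dvd_of_primary ha
  refine isCoprime_of_prime_dvd (fun h0 ↦ hlam (h0.1 ▸ dvd_zero lamZ)) fun q hq hqa hqm ↦ ?_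
  have hlamq : ¬ lamZ ∣ q := fun h ↦ hlam (h.trans hqa)
  obtain ⟨π, hqπ, hπ⟩ := exists_associated_primary hlamq
  exact h π (hqπ.prime hq) hπ (hqπ.dvd_iff_dvd_left.1 hqm) (hqπ.dvd_iff_dvd_left.1 hqa)

lemma sifted_excludedPrime (m : Zω) :
    sifted (excludedPrime m) Set.univ =
      (fun a ↦ Ideal.span {a}) '' {ℓ : Zω | 3 ∣ ℓ - 1 ∧ IsCoprime ℓ m} := by
  ext I
  constructor
  · intro hI
    rw [← I.span_singleton_generator, span_singleton_mem_sifted_excludedPrime] at hI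
    obtain ⟨ℓ, hIℓ, hℓ⟩ := exists_associated_primary hI.2
    refine ⟨ℓ, ⟨hℓ, isCoprime_of_primary hℓ fun π hπ hπ1 hπm hπℓ ↦ ?_⟩, ?_⟩
    · exact hI.1 π hπ hπ1 hπm (hIℓ.dvd_iff_dvd_right.2 hπℓ)
    · exact (Ideal.span_singleton_eq_span_singleton.2 hIℓ.symm).trans I.span_singleton_generator
  · rintro ⟨ℓ, ⟨hℓ, hℓm⟩, rfl⟩
    exact span_singleton_mem_sifted_excludedPrime.2
      ⟨fun π hπ _ hπm hπℓ ↦ hπ.not_isUnit (hℓm.isUnit_of_dvd' hπℓ hπm),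
        not_lamZ_dvd_of_primary hℓ⟩

lemma tsum_sifted_excludedPrime {E : Type*} [AddCommMonoid E] [TopologicalSpace E] (m : Zω)
    (F : Ideal Zω → E) :
    ∑' I : sifted (excludedPrime m) Set.univ, F I =
      ∑' ℓ : {ℓ : Zω // 3 ∣ ℓ - 1 ∧ IsCoprime ℓ m}, F (Ideal.span {ℓ.1}) := by
  rw [sifted_excludedPrime]
  exact tsum_image F fun a ha b hb h ↦ eq_of_span_singleton_eq_of_primary h ha.1 hb.1

lemma tprod_excludedPrime_mul (m : Zω) :
    (∏' π : {π : Zω // Prime π ∧ 3 ∣ π - 1 ∧ π ∣ m},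
        (1 - invSqAbsNorm Zω (Ideal.span {π.1}))⁻¹) *
      (1 - invSqAbsNorm Zω (Ideal.span {lamZ}))⁻¹ =
    (∑' I, invSqAbsNorm Zω I) *
      ∑' I : sifted (excludedPrime m) Set.univ, (moebius I.1 : ℂ) * invSqAbsNorm Zω I := by
  have hall := hasProd_one_sub_inv (prime_excludedPrime m) (excludedPrime_injective m)
    summable_norm_invSqAbsNorm
  have hinl := hasProd_one_sub_inv (fun π ↦ prime_excludedPrime m (.inl π))
    ((excludedPrime_injective m).comp Sum.inl_injective) summable_norm_invSqAbsNorm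
  have hinr := hasProd_unique fun i ↦ (1 - invSqAbsNorm Zω (excludedPrime m (.inr i)))⁻¹
  exact (HasProd.sum (f := fun i ↦ (1 - invSqAbsNorm Zω (excludedPrime m i))⁻¹)
    hinl.multipliable.hasProd hinr).unique hall

end Primary

theorem moebius_sum_coprime_general (μ : Zω → ℤ) (hμ : IsMoebiusZω μ) (m : Zω) :
    ∑' ℓ : {ℓ : Zω // (3 : Zω) ∣ (ℓ - 1) ∧ IsCoprime ℓ m},
        (μ ℓ.1 : ℂ) / (Nm ℓ.1 : ℂ) ^ 2 =
      9 / (8 * ∑' I : {I : Ideal Zω // I ≠ ⊥}, (Nat.card (Zω ⧸ I.1) : ℂ) ^ (-2 : ℂ)) *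
        ∏' π : {π : Zω // Prime π ∧ (3 : Zω) ∣ (π - 1) ∧ π ∣ m},
          (1 - (Nm π.1 : ℂ) ^ (-2 : ℂ))⁻¹ := by
  have hprod := tprod_excludedPrime_mul m
  have hzeta : ∑' I, invSqAbsNorm Zω I ≠ 0 :=
    left_ne_zero_of_mul_eq_one (tsum_mul_tsum_moebius summable_norm_invSqAbsNorm)
  rw [tsum_sifted_excludedPrime m fun I ↦ (UniqueFactorizationMonoid.moebius I : ℂ) *
    invSqAbsNorm Zω I] at hprod
  simp only [hμ.moebius_span_singleton, invSqAbsNorm_span_singleton, Nm_lamZ] at hprod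
  rw [tsum_invSqAbsNorm]
  simp only [div_eq_mul_inv, cpow_neg_two]
  refine mul_left_cancel₀ hzeta (hprod.symm.trans ?_)
  field_simp
  norm_num

open Complex in
/-- for `m ≡ 1 (mod 3)`,
`Σ_{ℓ ≡ 1 (3), (ℓ,m)=1} μ(ℓ)/N(ℓ)² = (9/(8 ζ_{ℚ(ω)}(2))) ∏_{π ≡ 1 (3), π ∣ m} (1 - N(π)^{-2})⁻¹`. -/
theorem moebius_sum_coprime (μ : Zω → ℤ) (hμ : IsMoebiusZω μ)
    (m : Zω) (hm : (3 : Zω) ∣ (m - 1)) (hm0 : m ≠ 0) :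
    ∑' ℓ : {ℓ : Zω // (3 : Zω) ∣ (ℓ - 1) ∧ IsCoprime ℓ m},
        (μ ℓ.1 : ℂ) / (Nm ℓ.1 : ℂ) ^ 2 =
      9 / (8 * ∑' I : {I : Ideal Zω // I ≠ ⊥}, (Nat.card (Zω ⧸ I.1) : ℂ) ^ (-2 : ℂ)) *
        ∏' π : {π : Zω // Prime π ∧ (3 : Zω) ∣ (π - 1) ∧ π ∣ m},
          (1 - (Nm π.1 : ℂ) ^ (-2 : ℂ))⁻¹ :=
  moebius_sum_coprime_general μ hμ m
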